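/- arXiv:1108.4257 — 5 statements merged into one kernel-verified Lean document; each statement's English description precedes it below -/
import Mathlib

section
/- For LOC(H,T): (1) for any X₁, X₂ ∈ F^{T×M} with ⟨X₁^T⟩ = ⟨X₂^T⟩ and any subspace V of F^N, there exists a bijection f from {Y ∈ F^{T×N} : ⟨Y^T⟩ = V} onto itself such that Pr{X₁H = Y} = Pr{X₂H = f(Y)} for all Y in this set; (2) for any Y₁, Y₂ ∈ F^{T×N} with ⟨Y₁^T⟩ = ⟨Y₂^T⟩ and any subspace U of F^M, there exists a bijection g from {X ∈ F^{T×M} : ⟨X^T⟩ = U} onto itself such that Pr{XH = Y₁} = Pr{g(X)H = Y₂} for all X in this set. -/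
open scoped Classical
open Finset Matrix Module

noncomputable section

/-- χ_m[r] = (q^m − 1)(q^m − q)⋯(q^m − q^{r−1}), with χ_m[0] = 1. -/
def chi (q m r : ℕ) : ℕ := ∏ i ∈ Finset.range r, (q ^ m - q ^ i)

/-- χ̃_m[r] = χ_m[r] · q^{−mr}, as a real number. -/
def chiTilde (q m r : ℕ) : ℝ := (chi q m r : ℝ) / (q : ℝ) ^ (m * r)

/-- Gaussian binomial [m choose r]_q = χ_m[r]/χ_r[r], as a real number. -/
def gaussR (q m r : ℕ) : ℝ := (chi q m r : ℝ) / (chi q r r : ℝ)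

variable {F : Type} [Field F] [Fintype F]

/-- Column space of a matrix. -/
def colSpace {m n : ℕ} (A : Matrix (Fin m) (Fin n) F) : Submodule F (Fin m → F) :=
  LinearMap.range A.mulVecLin

/-- Row space of a matrix. -/
def rowSpace {m n : ℕ} (A : Matrix (Fin m) (Fin n) F) : Submodule F (Fin n → F) :=
  colSpace Aᵀ

/-- Pr{XH = Y} for a random transfer matrix H with PMF `pH`, input `X`, output `Y`. -/
def prXY {k M N : ℕ} (pH : Matrix (Fin M) (Fin N) F → ℝ)
    (X : Matrix (Fin k) (Fin M) F) (Y : Matrix (Fin k) (Fin N) F) : ℝ :=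
  ∑ Hm : Matrix (Fin M) (Fin N) F, if X * Hm = Y then pH Hm else 0

/-- A PMF on a finite type: nonnegative and summing to one. -/
def IsPMF {Ω : Type*} [Fintype Ω] (p : Ω → ℝ) : Prop :=
  (∀ x, 0 ≤ p x) ∧ ∑ x, p x = 1

/-- α-type distribution: matrices with the same row space are equiprobable. -/
def IsAlphaType {T M : ℕ} (p : Matrix (Fin T) (Fin M) F → ℝ) : Prop :=
  ∀ X X' : Matrix (Fin T) (Fin M) F, rowSpace X = rowSpace X' → p X = p X'

/-- Mutual information I(f;g) (base 2) between two functions of a finitely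
distributed random element with PMF `p`; terms of zero probability vanish. -/
def mutualInfo {Ω A B : Type*} [Fintype Ω] (p : Ω → ℝ) (f : Ω → A) (g : Ω → B) : ℝ :=
  ∑ ω : Ω, p ω * Real.logb 2
    ((∑ ω' : Ω, if f ω' = f ω ∧ g ω' = g ω then p ω' else 0) /
      ((∑ ω' : Ω, if f ω' = f ω then p ω' else 0) *
        (∑ ω' : Ω, if g ω' = g ω then p ω' else 0)))

/-- Joint PMF of the input X and the independent transfer matrix H;
the channel output is Y = XH, i.e., `ω.1 * ω.2`. -/
def jointPMF {T M N : ℕ} (pX : Matrix (Fin T) (Fin M) F → ℝ)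
    (pH : Matrix (Fin M) (Fin N) F → ℝ) :
    Matrix (Fin T) (Fin M) F × Matrix (Fin M) (Fin N) F → ℝ :=
  fun ω => pX ω.1 * pH ω.2

/-- I(X;Y) for the LOC with input PMF `pX` and transfer PMF `pH`. -/
def miXY {T M N : ℕ} (pX : Matrix (Fin T) (Fin M) F → ℝ)
    (pH : Matrix (Fin M) (Fin N) F → ℝ) : ℝ :=
  mutualInfo (jointPMF pX pH) (fun ω => ω.1) (fun ω => ω.1 * ω.2)

/-- I(⟨X⟩;⟨Y⟩), mutual information between the column spaces. -/
def miColCol {T M N : ℕ} (pX : Matrix (Fin T) (Fin M) F → ℝ)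
    (pH : Matrix (Fin M) (Fin N) F → ℝ) : ℝ :=
  mutualInfo (jointPMF pX pH) (fun ω => colSpace ω.1) (fun ω => colSpace (ω.1 * ω.2))

/-- I(⟨X^T⟩;⟨Y^T⟩), mutual information between the row spaces. -/
def miRowRow {T M N : ℕ} (pX : Matrix (Fin T) (Fin M) F → ℝ)
    (pH : Matrix (Fin M) (Fin N) F → ℝ) : ℝ :=
  mutualInfo (jointPMF pX pH) (fun ω => rowSpace ω.1) (fun ω => rowSpace (ω.1 * ω.2))

/-- I(rank(X);rank(Y)). -/
def miRankRank {T M N : ℕ} (pX : Matrix (Fin T) (Fin M) F → ℝ)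
    (pH : Matrix (Fin M) (Fin N) F → ℝ) : ℝ :=
  mutualInfo (jointPMF pX pH) (fun ω => ω.1.rank) (fun ω => (ω.1 * ω.2).rank)

/-- Pr{rank(X) = r}. -/
def prRankX {T M : ℕ} (pX : Matrix (Fin T) (Fin M) F → ℝ) (r : ℕ) : ℝ :=
  ∑ x : Matrix (Fin T) (Fin M) F, if x.rank = r then pX x else 0

/-- Pr{rank(X) = r, rank(Y) = s} where Y = XH. -/
def prRankXY {T M N : ℕ} (pX : Matrix (Fin T) (Fin M) F → ℝ)
    (pH : Matrix (Fin M) (Fin N) F → ℝ) (r s : ℕ) : ℝ :=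
  ∑ ω : Matrix (Fin T) (Fin M) F × Matrix (Fin M) (Fin N) F,
    if ω.1.rank = r ∧ (ω.1 * ω.2).rank = s then jointPMF pX pH ω else 0

/-- J(rank(X);rank(Y)) = ∑_{r,s} Pr{rank X = r, rank Y = s} · log₂(χ_T[s]/χ_r[s]). -/
def Jrank (q : ℕ) {T M N : ℕ} (pX : Matrix (Fin T) (Fin M) F → ℝ)
    (pH : Matrix (Fin M) (Fin N) F → ℝ) : ℝ :=
  ∑ r ∈ Finset.range (T + 1), ∑ s ∈ Finset.range (T + 1),
    prRankXY pX pH r s * Real.logb 2 ((chi q T s : ℝ) / (chi q r s : ℝ))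

/-- Row-space-symmetric LOC: the transition probability P(Y|X) for ⟨Y⟩ ⊆ ⟨X⟩
is determined by the row spaces of the input and output matrices. -/
def RowSpaceSymmetric (T : ℕ) {M N : ℕ} (pH : Matrix (Fin M) (Fin N) F → ℝ) : Prop :=
  ∀ (X X' : Matrix (Fin T) (Fin M) F) (Y Y' : Matrix (Fin T) (Fin N) F),
    colSpace Y ≤ colSpace X → colSpace Y' ≤ colSpace X' →
    rowSpace X = rowSpace X' → rowSpace Y = rowSpace Y' →
    prXY pH X Y = prXY pH X' Y'

/-- Pr{⟨XH⟩ = V} for a fixed input matrix X. -/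
def prColY (T : ℕ) {M N : ℕ} (pH : Matrix (Fin M) (Fin N) F → ℝ)
    (X : Matrix (Fin T) (Fin M) F) (V : Submodule F (Fin T → F)) : ℝ :=
  ∑ Hm : Matrix (Fin M) (Fin N) F, if colSpace (X * Hm) = V then pH Hm else 0

/-- Unique subspace degradation: Pr{⟨XH⟩ = V} is the same for all inputs X
with the same column space. -/
def UniqueSubspaceDegradation (T : ℕ) {M N : ℕ}
    (pH : Matrix (Fin M) (Fin N) F → ℝ) : Prop :=
  ∀ (V : Submodule F (Fin T → F)) (X X' : Matrix (Fin T) (Fin M) F),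
    colSpace X = colSpace X' → prColY T pH X V = prColY T pH X' V

/-- Rank-symmetric LOC: P(Y|X) = μ(rank X, rank Y) when ⟨Y⟩ ⊆ ⟨X⟩, and 0 otherwise. -/
def RankSymmetric (T : ℕ) {M N : ℕ} (pH : Matrix (Fin M) (Fin N) F → ℝ) : Prop :=
  ∃ μ : ℕ → ℕ → ℝ, (∀ a b, 0 ≤ μ a b ∧ μ a b ≤ 1) ∧
    ∀ (X : Matrix (Fin T) (Fin M) F) (Y : Matrix (Fin T) (Fin N) F),
      prXY pH X Y = if colSpace Y ≤ colSpace X then μ X.rank Y.rank else 0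

/-- rank*(H) = max{r : Pr{rank H = r} > 0}. -/
def rankStar {M N : ℕ} (pH : Matrix (Fin M) (Fin N) F → ℝ) : ℕ :=
  sSup {r : ℕ | 0 < ∑ Hm : Matrix (Fin M) (Fin N) F, if Hm.rank = r then pH Hm else 0}

lemma aux_equiv {K V W : Type} [Field K] [AddCommGroup V] [Module K V] [FiniteDimensional K V]
    [AddCommGroup W] [Module K W] (A B : V →ₗ[K] W)
    (h : LinearMap.range A = LinearMap.range B) :
    ∃ e : V ≃ₗ[K] V, ∀ v, A (e v) = B v := by
  obtain ⟨C, hC⟩ := Submodule.exists_isCompl (LinearMap.ker A)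
  obtain ⟨D, hD⟩ := Submodule.exists_isCompl (LinearMap.ker B)
  have hk : finrank K (LinearMap.ker B) = finrank K (LinearMap.ker A) := by
    have h1 := A.finrank_range_add_finrank_ker
    have h2 := B.finrank_range_add_finrank_ker
    rw [h] at h1
    omega
  let k := LinearEquiv.ofFinrankEq _ _ hk
  let c : D ≃ₗ[K] C := (B.kerComplementEquivRange hD.symm).trans
    ((LinearEquiv.ofEq _ _ h.symm).trans (A.kerComplementEquivRange hC.symm).symm)
  have hc : ∀ d : D, A (c d) = B d := by
    intro d
    have h1 : (A.kerComplementEquivRange hC.symm) (c d) =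
        (LinearEquiv.ofEq _ _ h.symm) (B.kerComplementEquivRange hD.symm d) := by
      exact LinearEquiv.apply_symm_apply _ _
    have h2 := congrArg Subtype.val h1
    exact h2
  refine ⟨(Submodule.prodEquivOfIsCompl _ _ hD).symm.trans
    ((LinearEquiv.prodCongr k c).trans (Submodule.prodEquivOfIsCompl _ _ hC)), fun v => ?_⟩
  obtain ⟨⟨x, d⟩, rfl⟩ := (Submodule.prodEquivOfIsCompl _ _ hD).surjective v
  have hx : B x = 0 := x.2
  have hkx : A (k x) = 0 := (k x).2
  simp [hc, hx, hkx]

lemma aux_unit {F : Type} [Field F] {T M : ℕ}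
    (X₁ X₂ : Matrix (Fin T) (Fin M) F) (h : rowSpace X₁ = rowSpace X₂) :
    ∃ P Q : Matrix (Fin T) (Fin T) F, P * Q = 1 ∧ Q * P = 1 ∧ P * X₁ = X₂ := by
  obtain ⟨e, he⟩ := aux_equiv X₁ᵀ.mulVecLin X₂ᵀ.mulVecLin h
  have hXe : X₁ᵀ * LinearMap.toMatrix' e.toLinearMap = X₂ᵀ := by
    apply Matrix.toLin'.injective
    rw [Matrix.toLin'_mul, Matrix.toLin'_toMatrix']
    refine LinearMap.ext fun v => ?_
    exact he v
  refine ⟨(LinearMap.toMatrix' e.toLinearMap)ᵀ, (LinearMap.toMatrix' e.symm.toLinearMap)ᵀ,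
    ?_, ?_, ?_⟩
  · rw [← Matrix.transpose_mul, ← LinearMap.toMatrix'_comp]; simp
  · rw [← Matrix.transpose_mul, ← LinearMap.toMatrix'_comp]; simp
  · rw [← Matrix.transpose_transpose X₁, ← Matrix.transpose_mul, hXe, Matrix.transpose_transpose]

lemma aux_le {F : Type} [Field F] {T M : ℕ}
    (P : Matrix (Fin T) (Fin T) F) (X : Matrix (Fin T) (Fin M) F) :
    rowSpace (P * X) ≤ rowSpace X := by
  unfold rowSpace colSpace
  rw [Matrix.transpose_mul, Matrix.mulVecLin_mul]
  exact LinearMap.range_comp_le_range _ _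

lemma aux_row {F : Type} [Field F] {T M : ℕ}
    (P Q : Matrix (Fin T) (Fin T) F) (h : Q * P = 1) (X : Matrix (Fin T) (Fin M) F) :
    rowSpace (P * X) = rowSpace X := by
  refine le_antisymm (aux_le P X) ?_
  have := aux_le Q (P * X)
  rwa [← Matrix.mul_assoc, h, Matrix.one_mul] at this

def auxPerm {F : Type} [Field F] {T M : ℕ}
    (P Q : Matrix (Fin T) (Fin T) F) (h1 : P * Q = 1) (h2 : Q * P = 1)
    (V : Submodule F (Fin M → F)) :
    {Y : Matrix (Fin T) (Fin M) F // rowSpace Y = V} ≃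
      {Y : Matrix (Fin T) (Fin M) F // rowSpace Y = V} where
  toFun Y := ⟨P * Y.1, (aux_row P Q h2 Y.1).trans Y.2⟩
  invFun Y := ⟨Q * Y.1, (aux_row Q P h1 Y.1).trans Y.2⟩
  left_inv Y := Subtype.ext (by simp [← Matrix.mul_assoc, h2])
  right_inv Y := Subtype.ext (by simp [← Matrix.mul_assoc, h1])

lemma aux_pr {F : Type} [Field F] [Fintype F] {T M N : ℕ}
    (pH : Matrix (Fin M) (Fin N) F → ℝ)
    (P Q : Matrix (Fin T) (Fin T) F) (h : Q * P = 1)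
    (X : Matrix (Fin T) (Fin M) F) (Y : Matrix (Fin T) (Fin N) F) :
    prXY pH X Y = prXY pH (P * X) (P * Y) := by
  unfold prXY
  refine Finset.sum_congr rfl fun H _ => ?_
  have : X * H = Y ↔ P * X * H = P * Y := by
    constructor
    · rintro rfl; rw [Matrix.mul_assoc]
    · intro hh
      have := congrArg (Q * ·) hh
      simpa [← Matrix.mul_assoc, h] using this
  simp only [this]

/-- the permutation symmetry of the transition matrix of a LOC,
in rows (inputs with equal row spaces) and columns (outputs with equal row spaces). -/
theorem transition_matrix_symmetry
    {F : Type} [Field F] [Fintype F] (T M N : ℕ)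
    (pH : Matrix (Fin M) (Fin N) F → ℝ) (hpH : IsPMF pH) :
    (∀ X₁ X₂ : Matrix (Fin T) (Fin M) F, rowSpace X₁ = rowSpace X₂ →
      ∀ V : Submodule F (Fin N → F),
        ∃ f : {Y : Matrix (Fin T) (Fin N) F // rowSpace Y = V} ≃
              {Y : Matrix (Fin T) (Fin N) F // rowSpace Y = V},
          ∀ Y : {Y : Matrix (Fin T) (Fin N) F // rowSpace Y = V},
            prXY pH X₁ Y.1 = prXY pH X₂ (f Y).1)
    ∧ (∀ Y₁ Y₂ : Matrix (Fin T) (Fin N) F, rowSpace Y₁ = rowSpace Y₂ →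
      ∀ U : Submodule F (Fin M → F),
        ∃ g : {X : Matrix (Fin T) (Fin M) F // rowSpace X = U} ≃
              {X : Matrix (Fin T) (Fin M) F // rowSpace X = U},
          ∀ X : {X : Matrix (Fin T) (Fin M) F // rowSpace X = U},
            prXY pH X.1 Y₁ = prXY pH (g X).1 Y₂) := by
  constructor
  · intro X₁ X₂ h V
    obtain ⟨P, Q, h1, h2, rfl⟩ := aux_unit X₁ X₂ h
    exact ⟨auxPerm P Q h1 h2 V, fun Y => aux_pr pH P Q h2 X₁ Y.1⟩
  · intro Y₁ Y₂ h U
    obtain ⟨P, Q, h1, h2, rfl⟩ := aux_unit Y₁ Y₂ h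
    exact ⟨auxPerm P Q h1 h2 U, fun X => aux_pr pH P Q h2 X.1 Y₁⟩

end
end

section
/- For any LOC(H,T), there exists an α-type input distribution on F^{T×M} that maximizes the mutual information I(X;Y) between the input X and the output Y = XH over all input PMFs on F^{T×M}. -/
open scoped Classical
open Finset Matrix Module

noncomputable section

variable {F : Type} [Field F] [Fintype F]

/-- Output distribution. -/
def locOut {T M N : ℕ} (pX : Matrix (Fin T) (Fin M) F → ℝ)
    (pH : Matrix (Fin M) (Fin N) F → ℝ) (Y : Matrix (Fin T) (Fin N) F) : ℝ :=
  ∑ X, pX X * prXY pH X Y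

/-- Negative conditional entropy at an input. -/
def locCond {T M N : ℕ} (pH : Matrix (Fin M) (Fin N) F → ℝ)
    (X : Matrix (Fin T) (Fin M) F) : ℝ :=
  ∑ H, pH H * Real.log (prXY pH X (X * H))

/-- The objective (in nats). -/
def locObj {T M N : ℕ} (pH : Matrix (Fin M) (Fin N) F → ℝ)
    (pX : Matrix (Fin T) (Fin M) F → ℝ) : ℝ :=
  ∑ X, pX X * locCond pH X + ∑ Y, Real.negMulLog (locOut pX pH Y)

theorem prXY_nonneg' {T M N : ℕ} {pH : Matrix (Fin M) (Fin N) F → ℝ} (hpH : IsPMF pH)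
    (X : Matrix (Fin T) (Fin M) F) (Y : Matrix (Fin T) (Fin N) F) : 0 ≤ prXY pH X Y := by
  unfold prXY
  refine Finset.sum_nonneg fun H _ => ?_
  split_ifs
  · exact hpH.1 H
  · exact le_rfl

theorem locOut_eq_sum {T M N : ℕ} (pX : Matrix (Fin T) (Fin M) F → ℝ)
    (pH : Matrix (Fin M) (Fin N) F → ℝ) (Y : Matrix (Fin T) (Fin N) F) :
    locOut pX pH Y = ∑ X, ∑ H, if X * H = Y then pX X * pH H else 0 := by
  unfold locOut prXY
  refine Finset.sum_congr rfl fun X _ => ?_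
  rw [Finset.mul_sum]
  refine Finset.sum_congr rfl fun H _ => ?_
  split_ifs <;> simp

theorem miXY_eq {T M N : ℕ} (pX : Matrix (Fin T) (Fin M) F → ℝ)
    (pH : Matrix (Fin M) (Fin N) F → ℝ) (hpX : IsPMF pX) (hpH : IsPMF pH) :
    miXY pX pH = locObj pH pX / Real.log 2 := by
  have hterm : ∀ (X : Matrix (Fin T) (Fin M) F) (H : Matrix (Fin M) (Fin N) F),
      (pX X * pH H) * Real.logb 2 ((pX X * prXY pH X (X * H)) / (pX X * locOut pX pH (X * H)))
      = (pX X * (pH H * Real.log (prXY pH X (X * H)))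
        - pX X * pH H * Real.log (locOut pX pH (X * H))) / Real.log 2 := by
    intro X H
    by_cases hx : pX X = 0
    · simp [hx]
    by_cases hh : pH H = 0
    · simp [hh]
    have hx' : 0 < pX X := lt_of_le_of_ne (hpX.1 X) (Ne.symm hx)
    have hh' : 0 < pH H := lt_of_le_of_ne (hpH.1 H) (Ne.symm hh)
    have hW : 0 < prXY pH X (X * H) := by
      refine lt_of_lt_of_le hh' ?_
      unfold prXY
      have := Finset.single_le_sum (f := fun H' => if X * H' = X * H then pH H' else 0)
        (s := Finset.univ) (fun i _ => by
          split_ifs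
          · exact hpH.1 i
          · exact le_rfl) (Finset.mem_univ H)
      simpa using this
    have hO : 0 < locOut pX pH (X * H) := by
      refine lt_of_lt_of_le (mul_pos hx' hW) ?_
      unfold locOut
      exact Finset.single_le_sum (f := fun X' => pX X' * prXY pH X' (X * H))
        (s := Finset.univ) (fun i _ => mul_nonneg (hpX.1 i) (prXY_nonneg' hpH _ _))
        (Finset.mem_univ X)
    rw [mul_div_mul_left _ _ hx, Real.logb, Real.log_div hW.ne' hO.ne']
    ring
  have h1 : ∀ (X : Matrix (Fin T) (Fin M) F) (H : Matrix (Fin M) (Fin N) F),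
      (∑ ω' : Matrix (Fin T) (Fin M) F × Matrix (Fin M) (Fin N) F,
        if ω'.1 = X ∧ ω'.1 * ω'.2 = X * H then pX ω'.1 * pH ω'.2 else 0)
      = pX X * prXY pH X (X * H) := by
    intro X H
    rw [Fintype.sum_prod_type, Finset.sum_eq_single X]
    · unfold prXY
      rw [Finset.mul_sum]
      refine Finset.sum_congr rfl fun H' _ => ?_
      simp
    · intro X' _ hne
      simp [hne]
    · simp
  have h2 : ∀ (X : Matrix (Fin T) (Fin M) F),
      (∑ ω' : Matrix (Fin T) (Fin M) F × Matrix (Fin M) (Fin N) F,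
        if ω'.1 = X then pX ω'.1 * pH ω'.2 else 0) = pX X := by
    intro X
    rw [Fintype.sum_prod_type, Finset.sum_eq_single X]
    · simp [← Finset.mul_sum, hpH.2]
    · intro X' _ hne
      simp [hne]
    · simp
  have h3 : ∀ (Y : Matrix (Fin T) (Fin N) F),
      (∑ ω' : Matrix (Fin T) (Fin M) F × Matrix (Fin M) (Fin N) F,
        if ω'.1 * ω'.2 = Y then pX ω'.1 * pH ω'.2 else 0) = locOut pX pH Y := by
    intro Y
    rw [Fintype.sum_prod_type, locOut_eq_sum]
  have hlog : ∑ Y, Real.negMulLog (locOut pX pH Y)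
      = - ∑ X, ∑ H, pX X * pH H * Real.log (locOut pX pH (X * H)) := by
    have : ∀ Y, Real.negMulLog (locOut pX pH Y) = - ∑ X, ∑ H,
        if X * H = Y then pX X * pH H * Real.log (locOut pX pH Y) else 0 := by
      intro Y
      rw [Real.negMulLog, neg_mul]
      conv_lhs => rw [locOut_eq_sum pX pH Y, ← locOut_eq_sum pX pH Y]
      congr 1
      nth_rewrite 1 [locOut_eq_sum]
      rw [Finset.sum_mul]
      refine Finset.sum_congr rfl fun X _ => ?_
      rw [Finset.sum_mul]
      refine Finset.sum_congr rfl fun H _ => ?_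
      split_ifs <;> simp
    simp_rw [this]
    rw [Finset.sum_neg_distrib, Finset.sum_comm]
    congr 1
    refine Finset.sum_congr rfl fun X _ => ?_
    rw [Finset.sum_comm]
    refine Finset.sum_congr rfl fun H _ => ?_
    simp
  unfold miXY mutualInfo jointPMF
  rw [Fintype.sum_prod_type]
  trans ∑ X, ∑ H, (pX X * (pH H * Real.log (prXY pH X (X * H)))
        - pX X * pH H * Real.log (locOut pX pH (X * H))) / Real.log 2
  · refine Finset.sum_congr rfl fun X _ => Finset.sum_congr rfl fun H _ => ?_
    rw [← hterm X H]
    congr 3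
    · rw [← h1 X H]
      refine Finset.sum_congr rfl fun _ _ => ?_
      congr
    · congr 1
      · rw [← h2 X]
        refine Finset.sum_congr rfl fun _ _ => ?_
        congr
      · rw [← h3 (X * H)]
        refine Finset.sum_congr rfl fun _ _ => ?_
        congr
  unfold locObj locCond
  rw [hlog]
  simp only [Finset.mul_sum, ← Finset.sum_div, Finset.sum_sub_distrib]
  ring

theorem locObj_continuous {T M N : ℕ} (pH : Matrix (Fin M) (Fin N) F → ℝ) :
    Continuous (locObj (T := T) pH) := by
  unfold locObj locOut
  have := Real.continuous_negMulLog
  fun_prop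

theorem isPMF_iff {Ω : Type*} [Fintype Ω] (p : Ω → ℝ) : IsPMF p ↔ p ∈ stdSimplex ℝ Ω := Iff.rfl

theorem locObj_concave {T M N : ℕ} (pH : Matrix (Fin M) (Fin N) F → ℝ) (hpH : IsPMF pH) :
    ConcaveOn ℝ (stdSimplex ℝ (Matrix (Fin T) (Fin M) F)) (locObj (T := T) pH) := by
  refine ⟨convex_stdSimplex _ _, ?_⟩
  intro p hp r hr a b ha hb hab
  unfold locObj
  have hlin : ∀ Y, locOut (a • p + b • r) pH Y = a * locOut p pH Y + b * locOut r pH Y := by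
    intro Y
    simp only [locOut, Finset.mul_sum, ← Finset.sum_add_distrib, Pi.add_apply, Pi.smul_apply,
      smul_eq_mul]
    exact Finset.sum_congr rfl fun X _ => by ring
  have hlin2 : ∑ X, (a • p + b • r) X * locCond pH X
      = a * ∑ X, p X * locCond pH X + b * ∑ X, r X * locCond pH X := by
    simp only [Finset.mul_sum, ← Finset.sum_add_distrib, Pi.add_apply, Pi.smul_apply,
      smul_eq_mul]
    exact Finset.sum_congr rfl fun X _ => by ring
  have hpos : ∀ s ∈ stdSimplex ℝ (Matrix (Fin T) (Fin M) F), ∀ Y, 0 ≤ locOut s pH Y :=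
    fun s hs Y => Finset.sum_nonneg fun X _ => mul_nonneg (hs.1 X) (prXY_nonneg' hpH _ _)
  have hc : a * ∑ Y, Real.negMulLog (locOut p pH Y) + b * ∑ Y, Real.negMulLog (locOut r pH Y)
      ≤ ∑ Y, Real.negMulLog (locOut (a • p + b • r) pH Y) := by
    rw [Finset.mul_sum, Finset.mul_sum, ← Finset.sum_add_distrib]
    refine Finset.sum_le_sum fun Y _ => ?_
    rw [hlin]
    have := Real.concaveOn_negMulLog.2 (hpos p hp Y) (hpos r hr Y) ha hb hab
    simpa using this
  rw [hlin2]
  simp only [smul_eq_mul]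
  linarith

/-- Left multiplication by an invertible matrix. -/
def leftEquiv {T K : ℕ} (g : (Matrix (Fin T) (Fin T) F)ˣ) :
    Matrix (Fin T) (Fin K) F ≃ Matrix (Fin T) (Fin K) F where
  toFun X := g.val * X
  invFun X := g⁻¹.val * X
  left_inv X := by simp [← Matrix.mul_assoc]
  right_inv X := by simp [← Matrix.mul_assoc]

theorem leftEquiv_mul {T K L : ℕ} (g : (Matrix (Fin T) (Fin T) F)ˣ)
    (X : Matrix (Fin T) (Fin K) F) (H : Matrix (Fin K) (Fin L) F) :
    leftEquiv g X * H = leftEquiv g (X * H) := by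
  simp only [leftEquiv, Equiv.coe_fn_mk, Matrix.mul_assoc]

theorem prXY_left {T M N : ℕ} (pH : Matrix (Fin M) (Fin N) F → ℝ)
    (g : (Matrix (Fin T) (Fin T) F)ˣ)
    (X : Matrix (Fin T) (Fin M) F) (Y : Matrix (Fin T) (Fin N) F) :
    prXY pH (leftEquiv g X) (leftEquiv g Y) = prXY pH X Y := by
  unfold prXY
  simp [leftEquiv_mul]

theorem locObj_left {T M N : ℕ} (pH : Matrix (Fin M) (Fin N) F → ℝ)
    (g : (Matrix (Fin T) (Fin T) F)ˣ) (p : Matrix (Fin T) (Fin M) F → ℝ) :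
    locObj pH (fun X => p (leftEquiv g X)) = locObj pH p := by
  have hc : ∀ X : Matrix (Fin T) (Fin M) F, locCond pH (leftEquiv g X) = locCond pH X := by
    intro X
    unfold locCond
    simp [leftEquiv_mul, prXY_left]
  have ho : ∀ Y, locOut (fun X => p (leftEquiv g X)) pH Y = locOut p pH (leftEquiv g Y) := by
    intro Y
    unfold locOut
    rw [← Equiv.sum_comp (leftEquiv g) (fun X => p X * prXY pH X (leftEquiv g Y))]
    simp [prXY_left]
  unfold locObj
  congr 1
  · rw [← Equiv.sum_comp (leftEquiv g) (fun X => p X * locCond pH X)]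
    simp [hc]
  · simp only [ho]
    exact Equiv.sum_comp (leftEquiv g) (fun Y => Real.negMulLog (locOut p pH Y))

theorem exists_equiv_of_range_eq {V W : Type*} [AddCommGroup V] [Module F V]
    [FiniteDimensional F V] [AddCommGroup W] [Module F W] [FiniteDimensional F W]
    (f g : V →ₗ[F] W) (h : LinearMap.range f = LinearMap.range g) :
    ∃ e : V ≃ₗ[F] V, ∀ v, f (e v) = g v := by
  have key : ∀ f : V →ₗ[F] W, ∃ e : V ≃ₗ[F] (LinearMap.range f × LinearMap.ker f),
      ∀ v, ((e v).1 : W) = f v := by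
    intro f
    obtain ⟨C, hC⟩ := (LinearMap.ker f).exists_isCompl
    refine ⟨LinearMap.equivProdOfSurjectiveOfIsCompl f.rangeRestrict
      (Submodule.projectionOnto _ _ hC) (LinearMap.range_rangeRestrict f) (by simp)
      (by simpa using hC), ?_⟩
    intro v
    rfl
  obtain ⟨e₁, h₁⟩ := key f
  obtain ⟨e₂, h₂⟩ := key g
  have hk : finrank F (LinearMap.ker f) = finrank F (LinearMap.ker g) := by
    have a := LinearMap.finrank_range_add_finrank_ker f
    have b := LinearMap.finrank_range_add_finrank_ker g
    rw [h] at a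
    omega
  let k := LinearEquiv.ofFinrankEq _ _ hk
  refine ⟨e₂ ≪≫ₗ (LinearEquiv.prodCongr (LinearEquiv.ofEq _ _ h) k).symm ≪≫ₗ e₁.symm, ?_⟩
  intro v
  rw [← h₁, ← h₂]
  simp

theorem exists_unit_of_rowSpace_eq {T M : ℕ} (X X' : Matrix (Fin T) (Fin M) F)
    (h : rowSpace X = rowSpace X') :
    ∃ g : (Matrix (Fin T) (Fin T) F)ˣ, leftEquiv g X = X' := by
  obtain ⟨e, he⟩ := exists_equiv_of_range_eq _ _ h
  let A := LinearMap.toMatrix' e.toLinearMap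
  let B := LinearMap.toMatrix' e.symm.toLinearMap
  have hAB : A * B = 1 := by
    rw [← LinearMap.toMatrix'_comp]; simp
  have hBA : B * A = 1 := by
    rw [← LinearMap.toMatrix'_comp]; simp
  have hX : Xᵀ * A = X'ᵀ := by
    apply Matrix.toLin'.injective
    rw [Matrix.toLin'_mul]
    simp only [A, Matrix.toLin'_toMatrix']
    exact LinearMap.ext fun v => he v
  refine ⟨⟨Aᵀ, Bᵀ, ?_, ?_⟩, ?_⟩
  · rw [← Matrix.transpose_mul, hBA, Matrix.transpose_one]
  · rw [← Matrix.transpose_mul, hAB, Matrix.transpose_one]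
  · change Aᵀ * X = X'
    rw [← Matrix.transpose_transpose X', ← hX, Matrix.transpose_mul, Matrix.transpose_transpose]

/-- there exists an α-type input distribution maximizing I(X;Y). -/
theorem exists_alpha_type_capacity_achieving
    {F : Type} [Field F] [Fintype F] (T M N : ℕ)
    (pH : Matrix (Fin M) (Fin N) F → ℝ) (hpH : IsPMF pH) :
    ∃ pX : Matrix (Fin T) (Fin M) F → ℝ, IsPMF pX ∧ IsAlphaType pX ∧
      ∀ pX' : Matrix (Fin T) (Fin M) F → ℝ, IsPMF pX' →
        miXY pX' pH ≤ miXY pX pH := by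
  obtain ⟨p, hp, hmax⟩ := (isCompact_stdSimplex ℝ (Matrix (Fin T) (Fin M) F)).exists_isMaxOn
    ⟨_, single_mem_stdSimplex ℝ 0⟩ (locObj_continuous (T := T) pH).continuousOn
  let G := (Matrix (Fin T) (Fin T) F)ˣ
  let w : G → ℝ := fun _ => (Fintype.card G : ℝ)⁻¹
  let P : G → (Matrix (Fin T) (Fin M) F → ℝ) := fun g X => p (leftEquiv g X)
  have hw0 : ∀ g ∈ (Finset.univ : Finset G), 0 ≤ w g := fun g _ => by positivity
  have hw1 : ∑ g, w g = 1 := by simp [w]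
  have hP : ∀ g ∈ (Finset.univ : Finset G), P g ∈ stdSimplex ℝ (Matrix (Fin T) (Fin M) F) :=
    fun g _ => ⟨fun X => hp.1 _, by
      rw [← hp.2]; exact Equiv.sum_comp (leftEquiv g) p⟩
  have hconc := locObj_concave (T := T) pH hpH
  have hq : ∑ g, w g • P g ∈ stdSimplex ℝ (Matrix (Fin T) (Fin M) F) :=
    hconc.1.sum_mem hw0 hw1 hP
  have hge : locObj pH p ≤ locObj pH (∑ g, w g • P g) := by
    have := hconc.le_map_sum hw0 hw1 hP
    simp only [P, locObj_left] at this
    rwa [← Finset.sum_smul, hw1, one_smul] at this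
  refine ⟨_, hq, ?_, ?_⟩
  · intro X X' hXX
    obtain ⟨g, rfl⟩ := exists_unit_of_rowSpace_eq X X' hXX
    simp only [Finset.sum_apply, Pi.smul_apply, P, w]
    rw [← Equiv.sum_comp (Equiv.mulRight g)]
    refine Finset.sum_congr rfl fun g' _ => ?_
    simp [leftEquiv, Matrix.mul_assoc]
  · intro r hr
    rw [miXY_eq r pH hr hpH, miXY_eq _ pH hq hpH]
    have h2 : 0 ≤ Real.log 2 := Real.log_nonneg (by norm_num)
    exact div_le_div_of_nonneg_right ((hmax hr).trans hge) h2

end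
end

section
/- For LOC(H,T) with T ≥ M and any input distribution with Pr{rank(X) = M} = 1, J(rank(X);rank(Y)) = (T−M)·E[rank(H)]·log₂ q + ε(T,q), where ε(T,q) = ∑_s Pr{rank(H)=s} · log₂( χ̃_T[s]/χ̃_M[s] ) satisfies 0 ≤ ε(T,q) < 1.8. -/
open scoped Classical
open Finset Matrix Module

noncomputable section

variable {F : Type} [Field F] [Fintype F]

/-- ε(T,q) = ∑_s Pr{rank H = s} · log₂(χ̃_T[s]/χ̃_M[s]). -/
def epsTq {F : Type} [Field F] [Fintype F] (q T : ℕ) {M N : ℕ}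
    (pH : Matrix (Fin M) (Fin N) F → ℝ) : ℝ :=
  ∑ s ∈ Finset.range (M + 1),
    (∑ Hm : Matrix (Fin M) (Fin N) F, if Hm.rank = s then pH Hm else 0) *
      Real.logb 2 (chiTilde q T s / chiTilde q M s)

lemma rank_mul_full {F : Type} [Field F] {T M N : ℕ} (X : Matrix (Fin T) (Fin M) F)
    (H : Matrix (Fin M) (Fin N) F) (hX : X.rank = M) : (X * H).rank = H.rank := by
  have hinj : Function.Injective X.mulVecLin := by
    rw [← LinearMap.ker_eq_bot]
    have h := LinearMap.finrank_range_add_finrank_ker X.mulVecLin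
    rw [Matrix.rank] at hX
    rw [hX, Module.finrank_fin_fun] at h
    exact Submodule.finrank_eq_zero.mp (by omega)
  rw [Matrix.rank, Matrix.rank, Matrix.mulVecLin_mul, LinearMap.range_comp]
  exact (Submodule.equivMapOfInjective X.mulVecLin hinj _).finrank_eq.symm

lemma chiTilde_eq {q m s : ℕ} (hq : 2 ≤ q) (hs : s ≤ m) :
    chiTilde q m s = ∏ i ∈ Finset.range s, (1 - ((q : ℝ) ^ (m - i))⁻¹) := by
  have hq0 : (0 : ℝ) < q := by positivity
  unfold chiTilde chi
  have e : ((q : ℝ) ^ (m * s)) = ∏ _i ∈ Finset.range s, (q : ℝ) ^ m := by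
    rw [Finset.prod_const, Finset.card_range, pow_mul]
  rw [e, Nat.cast_prod, ← Finset.prod_div_distrib]
  refine Finset.prod_congr rfl fun i hi => ?_
  have hi' := Finset.mem_range.mp hi
  rw [Nat.cast_sub (Nat.pow_le_pow_right (by omega) (by omega))]
  obtain ⟨k, rfl⟩ := Nat.exists_eq_add_of_le (by omega : i ≤ m)
  rw [Nat.add_sub_cancel_left]
  push_cast
  rw [pow_add]
  field_simp

def PP (s : ℕ) : ℝ := ∏ i ∈ Finset.range s, (1 - ((2 : ℝ) ^ (i + 1))⁻¹)

lemma PP_succ (s : ℕ) : PP (s+1) = PP s * (1 - ((2 : ℝ) ^ (s + 1))⁻¹) := by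
  simp [PP, Finset.prod_range_succ]

lemma PP_aux (n : ℕ) : 0.2873 ≤ PP (n + 9) * (1 - ((2 : ℝ) ^ (n + 9))⁻¹) := by
  induction n with
  | zero => norm_num [PP, Finset.prod_range_succ]
  | succ k ih =>
    refine ih.trans ?_
    have e : k + 1 + 9 = (k + 9) + 1 := by ring
    rw [e, PP_succ (k + 9), mul_assoc]
    have h1 : 0 ≤ PP (k + 9) := by
      unfold PP
      refine Finset.prod_nonneg fun i _ => ?_
      have : ((2 : ℝ) ^ (i + 1))⁻¹ ≤ 1 := inv_le_one_of_one_le₀ (one_le_pow₀ (by norm_num))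
      linarith
    refine mul_le_mul_of_nonneg_left ?_ h1
    rw [pow_succ (2 : ℝ) (k + 9), mul_inv]
    nlinarith [sq_nonneg ((2 : ℝ) ^ (k + 9))⁻¹]

lemma PP_lower (n : ℕ) : 0.2873 ≤ PP n := by
  rcases lt_or_ge n 9 with h | h
  · interval_cases n <;> norm_num [PP, Finset.prod_range_succ]
  · obtain ⟨k, rfl⟩ := Nat.exists_eq_add_of_le' h
    have h1 := PP_aux k
    have h2 : 0 < ((2 : ℝ) ^ (k + 9))⁻¹ := by positivity
    have h3 : ((2 : ℝ) ^ (k + 9))⁻¹ ≤ 1 := inv_le_one_of_one_le₀ (one_le_pow₀ (by norm_num))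
    by_contra hc
    push Not at hc
    nlinarith

lemma logb_const : Real.logb 2 (1 / 0.2873) < 1.8 := by
  rw [Real.logb_lt_iff_lt_rpow (by norm_num) (by norm_num)]
  have h : ((2 : ℝ) ^ (1.8 : ℝ)) ^ 5 = 512 := by
    rw [← Real.rpow_natCast, ← Real.rpow_mul (by norm_num)]
    have : (1.8 : ℝ) * ((5 : ℕ) : ℝ) = ((9 : ℕ) : ℝ) := by norm_num
    rw [this, Real.rpow_natCast]; norm_num
  refine lt_of_pow_lt_pow_left₀ 5 (by positivity) ?_
  rw [h]; norm_num

lemma fac_nonneg {q k : ℕ} (hq : 2 ≤ q) (hk : 1 ≤ k) : 0 < 1 - ((q : ℝ) ^ k)⁻¹ := by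
  have : (1 : ℝ) < q := by exact_mod_cast hq
  have := inv_lt_one_of_one_lt₀ (one_lt_pow₀ this (by omega : k ≠ 0))
  linarith

lemma chiTilde_pos {q m s : ℕ} (hq : 2 ≤ q) (hs : s ≤ m) : 0 < chiTilde q m s := by
  rw [chiTilde_eq hq hs]
  refine Finset.prod_pos fun i hi => fac_nonneg hq ?_
  have := Finset.mem_range.mp hi
  omega

lemma chiTilde_le_one {q m s : ℕ} (hq : 2 ≤ q) (hs : s ≤ m) : chiTilde q m s ≤ 1 := by
  rw [chiTilde_eq hq hs]
  refine Finset.prod_le_one (fun i hi => (fac_nonneg hq ?_).le) fun i hi => ?_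
  · have := Finset.mem_range.mp hi
    omega
  · have : 0 ≤ ((q : ℝ) ^ (m - i))⁻¹ := by positivity
    linarith

lemma chiTilde_mono {q m t s : ℕ} (hq : 2 ≤ q) (hs : s ≤ m) (hmt : m ≤ t) :
    chiTilde q m s ≤ chiTilde q t s := by
  rw [chiTilde_eq hq hs, chiTilde_eq hq (hs.trans hmt)]
  have hq1 : (1 : ℝ) ≤ q := by exact_mod_cast (by omega : 1 ≤ q)
  refine Finset.prod_le_prod (fun i hi => (fac_nonneg hq ?_).le) fun i hi => ?_
  · have := Finset.mem_range.mp hi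
    omega
  · have : ((q : ℝ) ^ (t - i))⁻¹ ≤ ((q : ℝ) ^ (m - i))⁻¹ :=
      inv_anti₀ (by positivity) (pow_le_pow_right₀ hq1 (by omega))
    linarith

lemma chiTilde_lower {q m s : ℕ} (hq : 2 ≤ q) (hs : s ≤ m) : 0.2873 ≤ chiTilde q m s := by
  refine (PP_lower s).trans ?_
  rw [chiTilde_eq hq hs, PP, ← Finset.prod_range_reflect]
  have hq2 : (2 : ℝ) ≤ q := by exact_mod_cast hq
  refine Finset.prod_le_prod (fun i hi => ?_) fun i hi => ?_
  · exact (fac_nonneg (q := 2) le_rfl (Nat.succ_pos _)).le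
  · have hi' := Finset.mem_range.mp hi
    have h1 : (2 : ℝ) ^ (s - 1 - i + 1) ≤ (q : ℝ) ^ (m - i) :=
      (pow_le_pow_left₀ (by norm_num) hq2 _).trans
        (pow_le_pow_right₀ (by linarith) (by omega))
    have := inv_anti₀ (by positivity) h1
    linarith

lemma logb_chi {q M T s : ℕ} (hq : 2 ≤ q) (hs : s ≤ M) (hMT : M ≤ T) :
    Real.logb 2 ((chi q T s : ℝ) / (chi q M s : ℝ)) =
      ((T : ℝ) - M) * s * Real.logb 2 q + Real.logb 2 (chiTilde q T s / chiTilde q M s) := by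
  have hq0 : (0 : ℝ) < q := by exact_mod_cast (by omega : 0 < q)
  have key : ∀ m, s ≤ m → (chi q m s : ℝ) ≠ 0 ∧ Real.logb 2 (chi q m s : ℝ) =
      m * s * Real.logb 2 q + Real.logb 2 (chiTilde q m s) := by
    intro m hm
    have h1 := chiTilde_pos hq hm
    have h2 : (chi q m s : ℝ) = (q : ℝ) ^ (m * s) * chiTilde q m s := by
      unfold chiTilde; field_simp
    refine ⟨by rw [h2]; positivity, ?_⟩
    rw [h2, Real.logb_mul (by positivity) h1.ne', Real.logb_pow]
    push_cast; ring
  obtain ⟨a1, a2⟩ := key T (hs.trans hMT)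
  obtain ⟨b1, b2⟩ := key M hs
  rw [Real.logb_div a1 b1, a2, b2, Real.logb_div (chiTilde_pos hq (hs.trans hMT)).ne'
    (chiTilde_pos hq hs).ne']
  ring

lemma sum_fiber {Ω : Type*} [Fintype Ω] (p : Ω → ℝ) (f : Ω → ℕ) (g : ℕ → ℝ) (n : ℕ)
    (hf : ∀ ω, f ω ≤ n) :
    ∑ s ∈ Finset.range (n + 1), (∑ ω, if f ω = s then p ω else 0) * g s
      = ∑ ω, p ω * g (f ω) := by
  simp_rw [Finset.sum_mul]
  rw [Finset.sum_comm]
  refine Finset.sum_congr rfl fun ω _ => ?_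
  rw [Finset.sum_eq_single (f ω)]
  · simp
  · intro b _ hb
    simp [hb.symm]
  · intro h
    exact absurd (Finset.mem_range.mpr (Nat.lt_succ_of_le (hf ω))) h

lemma pX_zero {F : Type} [Field F] [Fintype F] {T M : ℕ}
    (pX : Matrix (Fin T) (Fin M) F → ℝ) (hpX : IsPMF pX) (hfull : prRankX pX M = 1)
    (x : Matrix (Fin T) (Fin M) F) (hx : x.rank ≠ M) : pX x = 0 := by
  obtain ⟨h0, h1⟩ := hpX
  have h2 : ∑ x, (pX x - if x.rank = M then pX x else 0) = 0 := by
    rw [Finset.sum_sub_distrib, h1]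
    unfold prRankX at hfull
    rw [hfull, sub_self]
  rw [Finset.sum_eq_zero_iff_of_nonneg] at h2
  · have := h2 x (Finset.mem_univ _)
    simpa [hx] using this
  · intro y _
    split_ifs
    · simp
    · simpa using h0 y

lemma prRankXY_full {F : Type} [Field F] [Fintype F] {T M N : ℕ}
    (pH : Matrix (Fin M) (Fin N) F → ℝ)
    (pX : Matrix (Fin T) (Fin M) F → ℝ) (hpX : IsPMF pX) (hfull : prRankX pX M = 1)
    (r s : ℕ) :
    prRankXY pX pH r s = if r = M then
      (∑ Hm : Matrix (Fin M) (Fin N) F, if Hm.rank = s then pH Hm else 0) else 0 := by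
  have key : ∀ (x : Matrix (Fin T) (Fin M) F) (H : Matrix (Fin M) (Fin N) F),
      (if x.rank = r ∧ (x * H).rank = s then pX x * pH H else 0)
        = pX x * (if r = M then (if H.rank = s then pH H else 0) else 0) := by
    intro x H
    by_cases hx : x.rank = M
    · rw [rank_mul_full x H hx, hx]
      by_cases hr : r = M
      · subst hr
        simp
      · simp [hr, Ne.symm hr]
    · rw [pX_zero pX hpX hfull x hx]
      simp
  unfold prRankXY jointPMF
  rw [Fintype.sum_prod_type]
  simp_rw [key]
  rw [← Finset.sum_mul_sum, hpX.2, one_mul]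
  split_ifs <;> simp

lemma Jrank_eq {F : Type} [Field F] [Fintype F] (q : ℕ) {T M N : ℕ} (hTM : M ≤ T)
    (pH : Matrix (Fin M) (Fin N) F → ℝ)
    (pX : Matrix (Fin T) (Fin M) F → ℝ) (hpX : IsPMF pX) (hfull : prRankX pX M = 1) :
    Jrank q pX pH = ∑ Hm : Matrix (Fin M) (Fin N) F,
      pH Hm * Real.logb 2 ((chi q T Hm.rank : ℝ) / (chi q M Hm.rank : ℝ)) := by
  unfold Jrank
  simp_rw [prRankXY_full pH pX hpX hfull]
  rw [Finset.sum_eq_single M]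
  · simp only [if_true]
    exact sum_fiber pH (fun H => H.rank)
      (fun s => Real.logb 2 ((chi q T s : ℝ) / (chi q M s : ℝ))) T
      (fun H => (Matrix.rank_le_height H).trans hTM)
  · intro b _ hb
    simp [hb]
  · intro h
    exact absurd (Finset.mem_range.mpr (Nat.lt_succ_of_le hTM)) h

lemma epsTq_eq {F : Type} [Field F] [Fintype F] (q T : ℕ) {M N : ℕ}
    (pH : Matrix (Fin M) (Fin N) F → ℝ) :
    epsTq q T pH = ∑ Hm : Matrix (Fin M) (Fin N) F,
      pH Hm * Real.logb 2 (chiTilde q T Hm.rank / chiTilde q M Hm.rank) :=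
  sum_fiber pH (fun H => H.rank)
    (fun s => Real.logb 2 (chiTilde q T s / chiTilde q M s)) M
    (fun H => Matrix.rank_le_height H)

/-- if T ≥ M and the input has rank M with probability one, then
J(rank X; rank Y) = (T−M)·E[rank H]·log₂ q + ε(T,q), where 0 ≤ ε(T,q) < 1.8. -/
theorem Jrank_full_rank_input
    {F : Type} [Field F] [Fintype F] (q T M N : ℕ) (hq : Fintype.card F = q)
    (hTM : M ≤ T)
    (pH : Matrix (Fin M) (Fin N) F → ℝ) (hpH : IsPMF pH)
    (pX : Matrix (Fin T) (Fin M) F → ℝ) (hpX : IsPMF pX)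
    (hfull : prRankX pX M = 1) :
    Jrank q pX pH
        = ((T : ℝ) - (M : ℝ))
            * (∑ Hm : Matrix (Fin M) (Fin N) F, pH Hm * (Hm.rank : ℝ))
            * Real.logb 2 (q : ℝ)
          + epsTq q T pH
    ∧ 0 ≤ epsTq q T pH ∧ epsTq q T pH < 1.8 := by
  have hq2 : 2 ≤ q := by
    rw [← hq]
    exact Fintype.one_lt_card
  have hr : ∀ H : Matrix (Fin M) (Fin N) F, H.rank ≤ M := fun H => Matrix.rank_le_height H
  refine ⟨?_, ?_, ?_⟩
  · rw [Jrank_eq q hTM pH pX hpX hfull, epsTq_eq, Finset.mul_sum, Finset.sum_mul,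
      ← Finset.sum_add_distrib]
    refine Finset.sum_congr rfl fun H _ => ?_
    rw [logb_chi hq2 (hr H) hTM]
    ring
  · rw [epsTq_eq]
    refine Finset.sum_nonneg fun H _ => mul_nonneg (hpH.1 H) ?_
    refine Real.logb_nonneg (by norm_num) ?_
    rw [one_le_div (chiTilde_pos hq2 (hr H))]
    exact chiTilde_mono hq2 (hr H) hTM
  · rw [epsTq_eq]
    refine lt_of_le_of_lt ?_ logb_const
    calc _ ≤ ∑ H : Matrix (Fin M) (Fin N) F, pH H * Real.logb 2 (1 / 0.2873) := by
          refine Finset.sum_le_sum fun H _ => mul_le_mul_of_nonneg_left ?_ (hpH.1 H)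
          refine Real.logb_le_logb_of_le (by norm_num)
            (div_pos (chiTilde_pos hq2 ((hr H).trans hTM)) (chiTilde_pos hq2 (hr H))) ?_
          exact div_le_div₀ zero_le_one (chiTilde_le_one hq2 ((hr H).trans hTM)) (by norm_num)
            (chiTilde_lower hq2 (hr H))
      _ = _ := by rw [← Finset.sum_mul, hpH.2, one_mul]

end
end

section
/- For LOC(H,T) with any α-type input distribution, I(⟨X⟩;⟨Y⟩) = J(rank(X);rank(Y)) + I(rank(X);rank(Y)), where Y = XH. -/
open scoped Classical
open Finset Matrix Module

noncomputable section

variable {F : Type} [Field F] [Fintype F]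

section Helpers

variable {K : Type} [Field K] [Fintype K]

/-- Two subspaces of equal dimension inside `U` are related by an automorphism fixing `U`. -/
theorem exists_equiv_map {E : Type} [AddCommGroup E] [Module K E] [FiniteDimensional K E]
    (U V V' : Submodule K E) (hV : V ≤ U) (hV' : V' ≤ U) (h : finrank K V = finrank K V') :
    ∃ e : E ≃ₗ[K] E, U.map (e : E →ₗ[K] E) = U ∧ V.map (e : E →ₗ[K] E) = V' := by
  have e0 : V ≃ₗ[K] V' := LinearEquiv.ofFinrankEq _ _ h
  let V1 : Submodule K U := V.comap U.subtype
  let V1' : Submodule K U := V'.comap U.subtype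
  have e1 : V1 ≃ₗ[K] V := Submodule.comapSubtypeEquivOfLe hV
  have e1' : V1' ≃ₗ[K] V' := Submodule.comapSubtypeEquivOfLe hV'
  let e2 : V1 ≃ₗ[K] V1' := e1.trans (e0.trans e1'.symm)
  obtain ⟨f, hf⟩ := Submodule.exists_linearEquiv_restrict_eq e2
  obtain ⟨g, hg⟩ := Submodule.exists_linearEquiv_restrict_eq f
  have hgU : ∀ u (hu : u ∈ U), g u = f ⟨u, hu⟩ := by
    intro u hu
    have := hg ⟨u, hu⟩
    simpa using this.symm
  have hgV : ∀ v (hv : v ∈ V), g v ∈ V' := by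
    intro v hv
    rw [hgU v (hV hv)]
    have h2 := hf ⟨⟨v, hV hv⟩, hv⟩
    rw [← h2]
    exact (e2 ⟨⟨v, hV hv⟩, hv⟩).2
  refine ⟨g, ?_, ?_⟩
  · apply Submodule.eq_of_le_of_finrank_eq
    · rintro _ ⟨u, hu, rfl⟩
      have : g u ∈ U := by rw [hgU u hu]; exact (f ⟨u, hu⟩).2
      simpa using this
    · exact LinearEquiv.finrank_map_eq g U
  · apply Submodule.eq_of_le_of_finrank_eq
    · rintro _ ⟨u, hu, rfl⟩
      simpa using hgV u hu
    · exact (LinearEquiv.finrank_map_eq g V).trans h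

/-- number of independent tuples in a subspace -/
theorem card_li_mem {E : Type} [AddCommGroup E] [Module K E] [Finite E]
    (W : Submodule K E) (s : ℕ) (hs : s ≤ finrank K W) :
    Nat.card {v : Fin s → E // LinearIndependent K v ∧ ∀ i, v i ∈ W} =
      chi (Fintype.card K) (finrank K W) s := by
  have := card_linearIndependent (K := K) (V := W) hs
  rw [chi, Finset.prod_range, ← this]
  refine Nat.card_congr ⟨fun v => ⟨fun i => ⟨v.1 i, v.2.2 i⟩, ?_⟩,
    fun v => ⟨fun i => v.1 i, ?_, fun i => (v.1 i).2⟩, fun v => rfl, fun v => rfl⟩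
  · exact LinearIndependent.of_comp W.subtype v.2.1
  · exact v.2.map' W.subtype (Submodule.ker_subtype W)

/-- number of `s`-dimensional subspaces of `W` -/
theorem card_sub_mul {E : Type} [AddCommGroup E] [Module K E] [Finite E]
    (W : Submodule K E) (s : ℕ) (hs : s ≤ finrank K W) :
    Nat.card {V : Submodule K E // V ≤ W ∧ finrank K V = s} * chi (Fintype.card K) s s =
      chi (Fintype.card K) (finrank K W) s := by
  rw [← card_li_mem W s hs]
  have e : {v : Fin s → E // LinearIndependent K v ∧ ∀ i, v i ∈ W} ≃
      Σ V : {V : Submodule K E // V ≤ W ∧ finrank K V = s},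
        {v : Fin s → E // LinearIndependent K v ∧ ∀ i, v i ∈ V.1} :=
    { toFun := fun v => ⟨⟨Submodule.span K (Set.range v.1), by
          rw [Submodule.span_le]; rintro _ ⟨i, rfl⟩; exact v.2.2 i, by
          rw [finrank_span_eq_card v.2.1, Fintype.card_fin]⟩,
          ⟨v.1, v.2.1, fun i => Submodule.subset_span ⟨i, rfl⟩⟩⟩
      invFun := fun x => ⟨x.2.1, x.2.2.1, fun i => x.1.2.1 (x.2.2.2 i)⟩
      left_inv := fun v => rfl
      right_inv := by
        rintro ⟨⟨V, hV, hs⟩, ⟨v, hv, hm⟩⟩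
        have : Submodule.span K (Set.range v) = V := by
          apply Submodule.eq_of_le_of_finrank_eq
          · rw [Submodule.span_le]; rintro _ ⟨i, rfl⟩; exact hm i
          · rw [finrank_span_eq_card hv, Fintype.card_fin, hs]
        subst this
        rfl }
  let : Fintype {V : Submodule K E // V ≤ W ∧ finrank K V = s} := Fintype.ofFinite _
  rw [Nat.card_congr e, Nat.card_sigma]
  have : ∀ V : {V : Submodule K E // V ≤ W ∧ finrank K V = s},
      Nat.card {v : Fin s → E // LinearIndependent K v ∧ ∀ i, v i ∈ V.1} =
        chi (Fintype.card K) s s := by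
    intro V
    rw [card_li_mem V.1 s V.2.2.ge, V.2.2]
  simp [this, Nat.card_eq_fintype_card]

theorem chi_pos (m s : ℕ) (h : s ≤ m) : 0 < chi (Fintype.card K) m s := by
  apply Finset.prod_pos
  intro i hi
  have := Finset.mem_range.1 hi
  have := Nat.pow_lt_pow_right (Fintype.one_lt_card (α := K)) (show i < m by omega)
  omega

theorem rank_eq_colSpace {m n : ℕ} (A : Matrix (Fin m) (Fin n) K) :
    A.rank = finrank K (colSpace A) := rfl

theorem colSpace_mul_le {m n k : ℕ} (A : Matrix (Fin m) (Fin n) K)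
    (B : Matrix (Fin n) (Fin k) K) : colSpace (A * B) ≤ colSpace A := by
  rw [colSpace, Matrix.mulVecLin_mul]
  exact LinearMap.range_comp_le_range _ _

theorem colSpace_equiv_mul {m n : ℕ} (e : (Fin m → K) ≃ₗ[K] (Fin m → K))
    (B : Matrix (Fin m) (Fin n) K) :
    colSpace (LinearMap.toMatrix' (e : (Fin m → K) →ₗ[K] (Fin m → K)) * B) =
      (colSpace B).map (e : (Fin m → K) →ₗ[K] (Fin m → K)) := by
  rw [colSpace, Matrix.mulVecLin_mul, LinearMap.range_comp, colSpace]
  congr 1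
  exact Matrix.toLin'_toMatrix' _

/-- left multiplication by an invertible map as a bijection of matrices -/
def mulEquiv' {m n : ℕ} (e : (Fin m → K) ≃ₗ[K] (Fin m → K)) :
    Matrix (Fin m) (Fin n) K ≃ Matrix (Fin m) (Fin n) K where
  toFun B := LinearMap.toMatrix' (e : (Fin m → K) →ₗ[K] (Fin m → K)) * B
  invFun B := LinearMap.toMatrix' (e.symm : (Fin m → K) →ₗ[K] (Fin m → K)) * B
  left_inv B := by
    beta_reduce
    rw [← Matrix.mul_assoc, ← LinearMap.toMatrix'_comp]; simp
  right_inv B := by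
    beta_reduce
    rw [← Matrix.mul_assoc, ← LinearMap.toMatrix'_comp]; simp

theorem rowSpace_mul_le {m n : ℕ} (A : Matrix (Fin m) (Fin m) K)
    (B : Matrix (Fin m) (Fin n) K) : rowSpace (A * B) ≤ rowSpace B := by
  rw [rowSpace, Matrix.transpose_mul]
  exact colSpace_mul_le _ _

theorem rowSpace_mulEquiv' {m n : ℕ} (e : (Fin m → K) ≃ₗ[K] (Fin m → K))
    (B : Matrix (Fin m) (Fin n) K) : rowSpace (mulEquiv' e B) = rowSpace B := by
  apply le_antisymm
  · exact rowSpace_mul_le _ _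
  · conv_lhs => rw [← (mulEquiv' e).symm_apply_apply B]
    exact rowSpace_mul_le _ _

/-- Probability of an event. -/
def prEv {Ω : Type} [Fintype Ω] (p : Ω → ℝ) (Q : Ω → Prop) : ℝ :=
  ∑ ω, if Q ω then p ω else 0

theorem prEv_pos {Ω : Type} [Fintype Ω] (p : Ω → ℝ) (hp : ∀ ω, 0 ≤ p ω) (Q : Ω → Prop)
    (ω : Ω) (hQ : Q ω) (hω : 0 < p ω) : 0 < prEv p Q := by
  apply Finset.sum_pos'
  · intro i _; split_ifs <;> simp [hp]
  · exact ⟨ω, Finset.mem_univ _, by simp [hQ, hω]⟩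

/-- Splitting an event over equiprobable labels. -/
theorem prEv_split {Ω S : Type} [Fintype Ω] [Finite S] (p : Ω → ℝ) (Q : Ω → Prop)
    (φ : Ω → S) (R : S → Prop) (hR : ∀ ω, Q ω → R (φ ω)) (c : ℝ)
    (hc : ∀ a, R a → prEv p (fun ω => Q ω ∧ φ ω = a) = c) :
    prEv p Q = Nat.card {a // R a} * c := by
  let : Fintype {a // R a} := Fintype.ofFinite _
  have h1 : prEv p Q = ∑ a : {a // R a}, prEv p (fun ω => Q ω ∧ φ ω = a.1) := by
    simp only [prEv]
    rw [Finset.sum_comm]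
    refine Finset.sum_congr rfl fun ω _ => ?_
    by_cases hQ : Q ω
    · rw [Finset.sum_eq_single ⟨φ ω, hR ω hQ⟩]
      · simp [hQ]
      · rintro ⟨a, ha⟩ _ hne
        rw [if_neg]
        rintro ⟨_, rfl⟩
        exact hne rfl
      · simp
    · simp [hQ]
  rw [h1, Finset.sum_congr rfl (fun a _ => hc a.1 a.2)]
  simp [Nat.card_eq_fintype_card]

/-- Invariance of the joint law under left multiplication. -/
theorem prEv_inv {T M N : ℕ} (pH : Matrix (Fin M) (Fin N) K → ℝ)
    (pX : Matrix (Fin T) (Fin M) K → ℝ) (hα : IsAlphaType pX)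
    (e : (Fin T → K) ≃ₗ[K] (Fin T → K))
    (Q : Submodule K (Fin T → K) → Submodule K (Fin T → K) → Prop) :
    prEv (jointPMF pX pH) (fun ω => Q (colSpace ω.1) (colSpace (ω.1 * ω.2))) =
    prEv (jointPMF pX pH) (fun ω => Q ((colSpace ω.1).map (e : (Fin T → K) →ₗ[K] (Fin T → K)))
      ((colSpace (ω.1 * ω.2)).map (e : (Fin T → K) →ₗ[K] (Fin T → K)))) := by
  unfold prEv
  rw [← ((mulEquiv' e).prodCongr (Equiv.refl _)).sum_comp]
  refine Finset.sum_congr rfl fun ω _ => ?_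
  have h1 : jointPMF pX pH (((mulEquiv' e).prodCongr (Equiv.refl _)) ω) = jointPMF pX pH ω := by
    simp only [jointPMF, Equiv.prodCongr_apply, Prod.map_fst, Prod.map_snd, Equiv.refl_apply]
    rw [hα _ ω.1 (rowSpace_mulEquiv' e ω.1)]
  rw [h1]
  simp only [Equiv.prodCongr_apply, Prod.map_fst, Prod.map_snd, Equiv.refl_apply]
  have h2 : colSpace (mulEquiv' e ω.1) =
      (colSpace ω.1).map (e : (Fin T → K) →ₗ[K] (Fin T → K)) := colSpace_equiv_mul e ω.1
  have h3 : colSpace (mulEquiv' e ω.1 * ω.2) =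
      (colSpace (ω.1 * ω.2)).map (e : (Fin T → K) →ₗ[K] (Fin T → K)) := by
    rw [← colSpace_equiv_mul e (ω.1 * ω.2), ← Matrix.mul_assoc]; rfl
  rw [h2, h3]

theorem map_inj' {E : Type} [AddCommGroup E] [Module K E] (e : E ≃ₗ[K] E)
    (A B : Submodule K E) : A.map (e : E →ₗ[K] E) = B.map (e : E →ₗ[K] E) ↔ A = B :=
  (Submodule.map_injective_of_injective e.injective).eq_iff

theorem ratio_algebra (a b c : ℝ) (d n1 n2 n3 : ℕ) (ha : 0 < a) (hb : 0 < b) (hc : 0 < c)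
    (hd : 0 < d) (h1 : (0 : ℝ) < n1) (h2 : 0 < n2) (h3 : 0 < n3) :
    a / (b * c) = ((n2 * d : ℕ) : ℝ) / ((n3 * d : ℕ) : ℝ) *
      ((n1 * (n3 * a)) / ((n1 * b) * (n2 * c))) := by
  push_cast
  have hd' : (0 : ℝ) < d := by exact_mod_cast hd
  have h2' : (0 : ℝ) < n2 := by exact_mod_cast h2
  have h3' : (0 : ℝ) < n3 := by exact_mod_cast h3
  field_simp

theorem key_ratio {T M N : ℕ} (pH : Matrix (Fin M) (Fin N) K → ℝ)
    (hpH : ∀ h, 0 ≤ pH h) (pX : Matrix (Fin T) (Fin M) K → ℝ) (hpX : ∀ x, 0 ≤ pX x)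
    (hα : IsAlphaType pX)
    (ω : Matrix (Fin T) (Fin M) K × Matrix (Fin M) (Fin N) K) (hω : 0 < jointPMF pX pH ω) :
    Real.logb 2 (prEv (jointPMF pX pH)
        (fun ω' => colSpace ω'.1 = colSpace ω.1 ∧ colSpace (ω'.1 * ω'.2) = colSpace (ω.1 * ω.2)) /
      (prEv (jointPMF pX pH) (fun ω' => colSpace ω'.1 = colSpace ω.1) *
       prEv (jointPMF pX pH) (fun ω' => colSpace (ω'.1 * ω'.2) = colSpace (ω.1 * ω.2)))) =
    Real.logb 2 ((chi (Fintype.card K) T (ω.1 * ω.2).rank : ℝ) /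
      (chi (Fintype.card K) ω.1.rank (ω.1 * ω.2).rank : ℝ)) +
    Real.logb 2 (prEv (jointPMF pX pH)
        (fun ω' => ω'.1.rank = ω.1.rank ∧ (ω'.1 * ω'.2).rank = (ω.1 * ω.2).rank) /
      (prEv (jointPMF pX pH) (fun ω' => ω'.1.rank = ω.1.rank) *
       prEv (jointPMF pX pH) (fun ω' => (ω'.1 * ω'.2).rank = (ω.1 * ω.2).rank))) := by
  have hp : ∀ ω, 0 ≤ jointPMF pX pH ω := fun ω => mul_nonneg (hpX _) (hpH _)
  have inv := prEv_inv pH pX hα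
  set p := jointPMF pX pH with hpdef
  have hVU : colSpace (ω.1 * ω.2) ≤ colSpace ω.1 := colSpace_mul_le _ _
  have pUV := prEv_pos p hp (fun ω' => colSpace ω'.1 = colSpace ω.1 ∧
    colSpace (ω'.1 * ω'.2) = colSpace (ω.1 * ω.2)) ω ⟨rfl, rfl⟩ hω
  have pU := prEv_pos p hp (fun ω' => colSpace ω'.1 = colSpace ω.1) ω rfl hω
  have pV := prEv_pos p hp (fun ω' => colSpace (ω'.1 * ω'.2) = colSpace (ω.1 * ω.2)) ω rfl hω
  have pr := prEv_pos p hp (fun ω' => ω'.1.rank = ω.1.rank) ω rfl hω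
  have ps := prEv_pos p hp (fun ω' => (ω'.1 * ω'.2).rank = (ω.1 * ω.2).rank) ω rfl hω
  have prs := prEv_pos p hp (fun ω' => ω'.1.rank = ω.1.rank ∧
    (ω'.1 * ω'.2).rank = (ω.1 * ω.2).rank) ω ⟨rfl, rfl⟩ hω
  have hsr : (ω.1 * ω.2).rank ≤ ω.1.rank := Submodule.finrank_mono hVU
  have hrT : ω.1.rank ≤ T := by simpa using ω.1.rank_le_height
  have tr : ∀ A B : Submodule K (Fin T → K), finrank K A = finrank K B →
      ∃ e : (Fin T → K) ≃ₗ[K] (Fin T → K), A.map (e : (Fin T → K) →ₗ[K] (Fin T → K)) = B := by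
    intro A B h
    obtain ⟨e, _, he⟩ := exists_equiv_map ⊤ A B le_top le_top h
    exact ⟨e, he⟩
  have fm : ∀ (e : (Fin T → K) ≃ₗ[K] (Fin T → K)) (A : Submodule K (Fin T → K)),
      finrank K (A.map (e : (Fin T → K) →ₗ[K] (Fin T → K))) = finrank K A :=
    fun e A => LinearEquiv.finrank_map_eq e A
  simp only [rank_eq_colSpace] at *
  set U := colSpace ω.1
  set V := colSpace (ω.1 * ω.2)
  -- U marginal
  have E1 : prEv p (fun ω' => finrank K (colSpace ω'.1) = finrank K U) =
      Nat.card {A : Submodule K (Fin T → K) // A ≤ ⊤ ∧ finrank K A = finrank K U} *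
        prEv p (fun ω' => colSpace ω'.1 = U) := by
    apply prEv_split p _ (fun ω' => colSpace ω'.1)
    · intro ω' h; exact ⟨le_top, h⟩
    · rintro A ⟨_, hA⟩
      obtain ⟨e, he⟩ := tr U A hA.symm
      rw [inv e (fun X Y => finrank K X = finrank K U ∧ X = A)]
      congr 1
      funext ω'
      rw [← he, map_inj', fm]
      exact propext ⟨fun h => h.2, fun h => ⟨by rw [h], h⟩⟩
  have E2 : prEv p (fun ω' => finrank K (colSpace (ω'.1 * ω'.2)) = finrank K V) =
      Nat.card {A : Submodule K (Fin T → K) // A ≤ ⊤ ∧ finrank K A = finrank K V} *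
        prEv p (fun ω' => colSpace (ω'.1 * ω'.2) = V) := by
    apply prEv_split p _ (fun ω' => colSpace (ω'.1 * ω'.2))
    · intro ω' h; exact ⟨le_top, h⟩
    · rintro A ⟨_, hA⟩
      obtain ⟨e, he⟩ := tr V A hA.symm
      rw [inv e (fun X Y => finrank K Y = finrank K V ∧ Y = A)]
      congr 1
      funext ω'
      rw [← he, map_inj', fm]
      exact propext ⟨fun h => h.2, fun h => ⟨by rw [h], h⟩⟩
  have E3 : prEv p (fun ω' => finrank K (colSpace ω'.1) = finrank K U ∧
        finrank K (colSpace (ω'.1 * ω'.2)) = finrank K V) =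
      Nat.card {A : Submodule K (Fin T → K) // A ≤ ⊤ ∧ finrank K A = finrank K U} *
        prEv p (fun ω' => colSpace ω'.1 = U ∧
          finrank K (colSpace (ω'.1 * ω'.2)) = finrank K V) := by
    apply prEv_split p _ (fun ω' => colSpace ω'.1)
    · intro ω' h; exact ⟨le_top, h.1⟩
    · rintro A ⟨_, hA⟩
      obtain ⟨e, he⟩ := tr U A hA.symm
      rw [inv e (fun X Y => (finrank K X = finrank K U ∧ finrank K Y = finrank K V) ∧ X = A)]
      congr 1
      funext ω'
      rw [← he, map_inj', fm, fm]
      exact propext ⟨fun h => ⟨h.2, h.1.2⟩, fun h => ⟨⟨by rw [h.1], h.2⟩, h.1⟩⟩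
  have E4 : prEv p (fun ω' => colSpace ω'.1 = U ∧
          finrank K (colSpace (ω'.1 * ω'.2)) = finrank K V) =
      Nat.card {A : Submodule K (Fin T → K) // A ≤ U ∧ finrank K A = finrank K V} *
        prEv p (fun ω' => colSpace ω'.1 = U ∧ colSpace (ω'.1 * ω'.2) = V) := by
    apply prEv_split p _ (fun ω' => colSpace (ω'.1 * ω'.2))
    · intro ω' h
      refine ⟨?_, h.2⟩
      rw [← h.1]; exact colSpace_mul_le _ _
    · rintro A ⟨hAU, hA⟩
      obtain ⟨e, heU, he⟩ := exists_equiv_map U V A hVU hAU hA.symm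
      rw [inv e (fun X Y => (X = U ∧ finrank K Y = finrank K V) ∧ Y = A)]
      congr 1
      funext ω'
      rw [← he, map_inj', fm]
      have : ((colSpace ω'.1).map (e : (Fin T → K) →ₗ[K] (Fin T → K)) = U) ↔
          colSpace ω'.1 = U := by
        conv_lhs => rw [← heU]
        exact map_inj' _ _ _
      rw [this]
      exact propext ⟨fun h => ⟨h.1.1, h.2⟩, fun h => ⟨⟨h.1, by rw [h.2]⟩, h.2⟩⟩
  have hT : finrank K (⊤ : Submodule K (Fin T → K)) = T := by simp
  have C1 := card_sub_mul (⊤ : Submodule K (Fin T → K)) (finrank K V) (by omega)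
  have C2 := card_sub_mul U (finrank K V) hsr
  rw [hT] at C1
  have P1 := chi_pos (K := K) T (finrank K V) (by omega)
  have P2 := chi_pos (K := K) (finrank K U) (finrank K V) hsr
  have P3 := chi_pos (K := K) (finrank K V) (finrank K V) le_rfl
  rw [E4] at E3
  rw [← Real.logb_mul (by positivity) (by positivity)]
  congr 1
  rw [E1] at pr
  rw [E2] at ps
  rw [E3] at prs
  rw [E1, E2, E3]
  rw [← C1] at P1
  rw [← C2] at P2
  rw [← C1, ← C2]
  exact ratio_algebra _ _ _ _ _ _ _ pUV pU pV P3 (pos_of_mul_pos_left (by exact_mod_cast pr) pU.le)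
    (Nat.pos_of_mul_pos_right P1) (Nat.pos_of_mul_pos_right P2)

theorem Jrank_eq_s9 {T M N : ℕ} (q : ℕ) (pH : Matrix (Fin M) (Fin N) K → ℝ)
    (pX : Matrix (Fin T) (Fin M) K → ℝ) :
    Jrank q pX pH = ∑ ω, jointPMF pX pH ω * Real.logb 2 ((chi q T (ω.1 * ω.2).rank : ℝ) /
      (chi q ω.1.rank (ω.1 * ω.2).rank : ℝ)) := by
  simp only [Jrank, prRankXY, Finset.sum_mul]
  rw [Finset.sum_congr rfl (fun r _ => Finset.sum_comm), Finset.sum_comm]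
  refine Finset.sum_congr rfl fun ω _ => ?_
  have h1 : ω.1.rank ∈ Finset.range (T + 1) := by
    have : ω.1.rank ≤ T := by simpa using ω.1.rank_le_height
    simp; omega
  have h2 : (ω.1 * ω.2).rank ∈ Finset.range (T + 1) := by
    have : (ω.1 * ω.2).rank ≤ T := by simpa using (ω.1 * ω.2).rank_le_height
    simp; omega
  rw [Finset.sum_eq_single_of_mem _ h1, Finset.sum_eq_single_of_mem _ h2]
  · simp
  · intro s _ hs
    rw [if_neg, zero_mul]
    rintro ⟨_, h⟩; exact hs h.symm
  · intro r _ hr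
    apply Finset.sum_eq_zero
    intro s _
    rw [if_neg, zero_mul]
    rintro ⟨h, _⟩; exact hr h.symm

end Helpers

/-- for an α-type input,
I(⟨X⟩;⟨Y⟩) = J(rank X; rank Y) + I(rank X; rank Y). -/
theorem alpha_type_subspace_mutual_information
    {F : Type} [Field F] [Fintype F] (q T M N : ℕ) (hq : Fintype.card F = q)
    (pH : Matrix (Fin M) (Fin N) F → ℝ) (hpH : IsPMF pH)
    (pX : Matrix (Fin T) (Fin M) F → ℝ) (hpX : IsPMF pX) (hα : IsAlphaType pX) :
    miColCol pX pH = Jrank q pX pH + miRankRank pX pH := by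
  subst hq
  rw [Jrank_eq_s9, miColCol, miRankRank, mutualInfo, mutualInfo, ← Finset.sum_add_distrib]
  refine Finset.sum_congr rfl fun ω _ => ?_
  rw [← mul_add]
  have h0 : 0 ≤ jointPMF pX pH ω := mul_nonneg (hpX.1 _) (hpH.1 _)
  rcases h0.eq_or_lt with h | h
  · rw [← h, zero_mul, zero_mul]
  · congr 1
    have key := key_ratio pH hpH.1 pX hpX.1 hα ω h
    simp only [prEv] at key
    convert key

end
end

section
/- For LOC(H,T) with any α-type input distribution and Y = XH: for all subspaces U, V of F^T with V ⊆ U, dim(U) = r and dim(V) = s, one has Pr{⟨X⟩ = U, ⟨Y⟩ = V} = Pr{rank(X)=r, rank(Y)=s} / ( [T choose r]_q · [r choose s]_q ); moreover Pr{⟨X⟩ = U} = Pr{rank(X)=r} / [T choose r]_q and Pr{⟨Y⟩ = V} = Pr{rank(Y)=s} / [T choose s]_q. -/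
open scoped Classical
open Finset Matrix Module

noncomputable section

variable {F : Type} [Field F] [Fintype F]

lemma aux_ite {P Q : Prop} {dP : Decidable P} {dQ : Decidable Q} (h : P ↔ Q) (a : ℝ) :
    (@ite ℝ P dP a 0) = @ite ℝ Q dQ a 0 := by
  by_cases hP : P
  · rw [if_pos hP, if_pos (h.1 hP)]
  · rw [if_neg hP, if_neg (fun hQ => hP (h.2 hQ))]

lemma aux_unif {Ω L : Type*} [Fintype Ω] [Finite L] (p : Ω → ℝ) (f : Ω → L) (S : L → Prop)
    (c : ℝ) (hc : c ≠ 0) (hcard : (Nat.card {l // S l} : ℝ) = c)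
    (hinv : ∀ l l', S l → S l' → ∃ (σ : Ω ≃ Ω) (g : L → L), Function.Injective g ∧ g l = l' ∧
      (∀ ω, p (σ ω) = p ω) ∧ ∀ ω, f (σ ω) = g (f ω))
    (l₀ : L) (h₀ : S l₀) :
    (∑ ω, if f ω = l₀ then p ω else 0) = (∑ ω, if S (f ω) then p ω else 0) / c := by
  have : Fintype L := Fintype.ofFinite L
  rw [eq_div_iff hc]
  have h1 : (∑ ω, if S (f ω) then p ω else 0)
      = ∑ l : {l // S l}, ∑ ω, if f ω = l then p ω else 0 := by
    rw [Finset.sum_comm]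
    refine Finset.sum_congr rfl fun ω _ => ?_
    split_ifs with h
    · rw [Finset.sum_eq_single (⟨f ω, h⟩ : {l // S l})]
      · simp
      · intro b _ hb
        rw [if_neg]
        intro h'
        exact hb (Subtype.ext h'.symm)
      · simp
    · symm
      apply Finset.sum_eq_zero
      intro b _
      rw [if_neg]
      intro h'
      exact h (h' ▸ b.2)
  have h2 : ∀ l : {l // S l}, (∑ ω, if f ω = l then p ω else 0)
      = ∑ ω, if f ω = l₀ then p ω else 0 := by
    rintro ⟨l, hl⟩
    obtain ⟨σ, g, hg, hgl, hp, hf⟩ := hinv l₀ l h₀ hl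
    rw [← Equiv.sum_comp σ]
    refine Finset.sum_congr rfl fun ω _ => ?_
    rw [hp, hf]
    exact if_congr (by change g (f ω) = l ↔ _; rw [← hgl]; exact hg.eq_iff) rfl rfl
  rw [h1, Finset.sum_congr rfl (fun l _ => h2 l), Finset.sum_const, ← hcard,
    Nat.card_eq_fintype_card, nsmul_eq_mul, mul_comm, Finset.card_univ]

lemma aux_chi_pos {q m r : ℕ} (hq : 1 < q) (h : r ≤ m) : 0 < chi q m r := by
  unfold chi
  refine Finset.prod_pos fun i hi => ?_
  have := Finset.mem_range.1 hi
  exact Nat.sub_pos_of_lt (Nat.pow_lt_pow_right hq (by omega))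

lemma aux_gauss_ne {q m r : ℕ} (hq : 1 < q) (h : r ≤ m) : gaussR q m r ≠ 0 := by
  unfold gaussR
  have := aux_chi_pos hq h
  have := aux_chi_pos hq (le_refl r)
  positivity

lemma aux_card_li {E : Type} [AddCommGroup E] [Module F E] [Finite E] {s : ℕ}
    (h : s ≤ finrank F E) :
    Nat.card {v : Fin s → E // LinearIndependent F v} = chi (Fintype.card F) (finrank F E) s := by
  rw [card_linearIndependent h, chi, Finset.prod_range]

lemma aux_card_sub {E : Type} [AddCommGroup E] [Module F E] [Finite E] {s : ℕ}
    (h : s ≤ finrank F E) :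
    (Nat.card {V : Submodule F E // finrank F V = s} : ℝ)
      = gaussR (Fintype.card F) (finrank F E) s := by
  have hq : 1 < Fintype.card F := Fintype.one_lt_card
  have hpos := aux_chi_pos hq (le_refl s)
  have : Finite (Submodule F E) := inferInstance
  have : Fintype {V : Submodule F E // finrank F V = s} := Fintype.ofFinite _
  let φ : {v : Fin s → E // LinearIndependent F v} → {V : Submodule F E // finrank F V = s} :=
    fun v => ⟨Submodule.span F (Set.range v.1), by simpa using finrank_span_eq_card v.2⟩
  have hfib : ∀ V, Nat.card {v // φ v = V} = chi (Fintype.card F) s s := by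
    rintro ⟨V, hV⟩
    have hc := aux_card_li (F := F) (E := V) (s := s) hV.ge
    rw [hV] at hc
    rw [← hc]
    refine Nat.card_congr ⟨fun v => ⟨fun i => ⟨v.1.1 i, ?_⟩, ?_⟩,
      fun w => ⟨⟨fun i => (w.1 i : E), ?_⟩, ?_⟩, ?_, ?_⟩
    · have := congrArg Subtype.val v.2
      simp only [φ] at this
      exact this.le (Submodule.subset_span ⟨i, rfl⟩)
    · exact LinearIndependent.of_comp V.subtype v.1.2
    · exact w.2.map' V.subtype (Submodule.ker_subtype V)
    · apply Subtype.ext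
      have h3 := w.2.span_eq_top_of_card_eq_finrank' (by simp [hV])
      have h4 := congrArg (Submodule.map V.subtype) h3
      rw [Submodule.map_span, ← Set.range_comp, Submodule.map_top, Submodule.range_subtype] at h4
      exact h4
    · intro v; rfl
    · intro w; rfl
  have key : Nat.card {v : Fin s → E // LinearIndependent F v}
      = Nat.card {V : Submodule F E // finrank F V = s} * chi (Fintype.card F) s s := by
    rw [← Nat.card_congr (Equiv.sigmaFiberEquiv φ), Nat.card_sigma,
      Finset.sum_congr rfl (fun V _ => hfib V), Finset.sum_const, Nat.card_eq_fintype_card,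
      Finset.card_univ, smul_eq_mul]
  rw [aux_card_li h] at key
  unfold gaussR
  rw [eq_div_iff (by positivity), key]
  push_cast
  ring

lemma aux_extend {E E' : Type} [AddCommGroup E] [Module F E] [AddCommGroup E'] [Module F E']
    [FiniteDimensional F E] [FiniteDimensional F E'] (hE : finrank F E = finrank F E')
    (V : Submodule F E) (V' : Submodule F E') (e : V ≃ₗ[F] V') :
    ∃ g : E ≃ₗ[F] E', ∀ v : V, g v = e v := by
  obtain ⟨C, hC⟩ := Submodule.exists_isCompl V
  obtain ⟨C', hC'⟩ := Submodule.exists_isCompl V'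
  have h1 := Submodule.finrank_add_eq_of_isCompl hC
  have h2 := Submodule.finrank_add_eq_of_isCompl hC'
  have h3 := e.finrank_eq
  let c : C ≃ₗ[F] C' := LinearEquiv.ofFinrankEq _ _ (by omega)
  refine ⟨(Submodule.prodEquivOfIsCompl V C hC).symm ≪≫ₗ (e.prodCongr c) ≪≫ₗ
    Submodule.prodEquivOfIsCompl V' C' hC', fun v => ?_⟩
  simp

lemma aux_map_eq {E : Type} [AddCommGroup E] [Module F E]
    [FiniteDimensional F E] (V V' : Submodule F E) (e : V ≃ₗ[F] V') (g : E ≃ₗ[F] E)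
    (hg : ∀ v : V, g v = e v) : V.map (g : E →ₗ[F] E) = V' := by
  apply Submodule.eq_of_le_of_finrank_eq
  · rintro _ ⟨v, hv, rfl⟩
    have := hg ⟨v, hv⟩
    simp only [LinearEquiv.coe_coe] at this ⊢
    rw [this]
    exact (e _).2
  · rw [LinearEquiv.finrank_map_eq, e.finrank_eq]

lemma aux_flag {E : Type} [AddCommGroup E] [Module F E] [FiniteDimensional F E]
    (U U' V V' : Submodule F E) (h : V ≤ U) (h' : V' ≤ U')
    (hU : finrank F U = finrank F U') (hV : finrank F V = finrank F V') :
    ∃ g : E ≃ₗ[F] E, U.map (g : E →ₗ[F] E) = U' ∧ V.map (g : E →ₗ[F] E) = V' := by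
  let e : V ≃ₗ[F] V' := LinearEquiv.ofFinrankEq _ _ hV
  let a := Submodule.submoduleOfEquivOfLe h
  let a' := Submodule.submoduleOfEquivOfLe h'
  obtain ⟨e₁, he₁⟩ := aux_extend hU (V.submoduleOf U) (V'.submoduleOf U') (a ≪≫ₗ e ≪≫ₗ a'.symm)
  obtain ⟨g, hg⟩ := aux_extend rfl U U' e₁
  refine ⟨g, aux_map_eq U U' e₁ g hg, aux_map_eq V V' e g fun v => ?_⟩
  have h1 := hg ⟨v, h v.2⟩
  have h2 := he₁ (a.symm v)
  have h3 : ((a.symm v : V.submoduleOf U) : U) = ⟨v, h v.2⟩ := rfl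
  rw [h3] at h2
  rw [h2] at h1
  rw [h1]
  simp
  rfl

lemma aux_colSpace_mul {T M N : ℕ} (A : Matrix (Fin T) (Fin M) F) (B : Matrix (Fin M) (Fin N) F) :
    colSpace (A * B) = (colSpace B).map A.mulVecLin := by
  unfold colSpace
  rw [Matrix.mulVecLin_mul, LinearMap.range_comp]

/-- A linear automorphism acts on matrices by left multiplication. -/
def auxAct {T M : ℕ} (g : (Fin T → F) ≃ₗ[F] (Fin T → F)) :
    Matrix (Fin T) (Fin M) F ≃ Matrix (Fin T) (Fin M) F where
  toFun X := LinearMap.toMatrix' (g : (Fin T → F) →ₗ[F] (Fin T → F)) * X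
  invFun X := LinearMap.toMatrix' (g.symm : (Fin T → F) →ₗ[F] (Fin T → F)) * X
  left_inv X := by
    simp only [← Matrix.mul_assoc, ← LinearMap.toMatrix'_comp]
    simp
  right_inv X := by
    simp only [← Matrix.mul_assoc, ← LinearMap.toMatrix'_comp]
    simp

lemma auxAct_mul {T M N : ℕ} (g : (Fin T → F) ≃ₗ[F] (Fin T → F))
    (X : Matrix (Fin T) (Fin M) F) (H : Matrix (Fin M) (Fin N) F) :
    auxAct g X * H = auxAct g (X * H) :=
  Matrix.mul_assoc (LinearMap.toMatrix' (g : (Fin T → F) →ₗ[F] (Fin T → F))) X H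

lemma auxAct_col {T M : ℕ} (g : (Fin T → F) ≃ₗ[F] (Fin T → F))
    (X : Matrix (Fin T) (Fin M) F) :
    colSpace (auxAct g X) = (colSpace X).map (g : (Fin T → F) →ₗ[F] (Fin T → F)) := by
  change colSpace (LinearMap.toMatrix' (g : (Fin T → F) →ₗ[F] (Fin T → F)) * X) = _
  rw [aux_colSpace_mul, ← Matrix.toLin'_apply', Matrix.toLin'_toMatrix']

lemma aux_row_le {T M : ℕ} (g : (Fin T → F) ≃ₗ[F] (Fin T → F))
    (X : Matrix (Fin T) (Fin M) F) : rowSpace (auxAct g X) ≤ rowSpace X := by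
  change colSpace (LinearMap.toMatrix' (g : (Fin T → F) →ₗ[F] (Fin T → F)) * X)ᵀ ≤ colSpace Xᵀ
  rw [Matrix.transpose_mul]
  unfold colSpace
  rw [Matrix.mulVecLin_mul]
  exact LinearMap.range_comp_le_range _ _

lemma aux_row_s10 {T M : ℕ} (g : (Fin T → F) ≃ₗ[F] (Fin T → F))
    (X : Matrix (Fin T) (Fin M) F) : rowSpace (auxAct g X) = rowSpace X := by
  apply le_antisymm (aux_row_le g X)
  have := aux_row_le g.symm (auxAct g X)
  have h2 : auxAct g.symm (auxAct g X) = X := (auxAct g).left_inv X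
  rwa [h2] at this

lemma aux_card_flag {E : Type} [AddCommGroup E] [Module F E] [Finite E] {r s : ℕ}
    (hr : r ≤ finrank F E) (hs : s ≤ r) :
    (Nat.card {P : Submodule F E × Submodule F E //
        P.2 ≤ P.1 ∧ finrank F P.1 = r ∧ finrank F P.2 = s} : ℝ)
      = gaussR (Fintype.card F) (finrank F E) r * gaussR (Fintype.card F) r s := by
  have : Finite (Submodule F E) := inferInstance
  have : Fintype {V : Submodule F E // finrank F V = r} := Fintype.ofFinite _
  let eqv : {P : Submodule F E × Submodule F E //
        P.2 ≤ P.1 ∧ finrank F P.1 = r ∧ finrank F P.2 = s} ≃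
      Σ U : {U : Submodule F E // finrank F U = r}, {W : Submodule F U.1 // finrank F W = s} :=
    { toFun := fun P => ⟨⟨P.1.1, P.2.2.1⟩, ⟨P.1.2.submoduleOf P.1.1, by
        rw [(Submodule.submoduleOfEquivOfLe P.2.1).finrank_eq]; exact P.2.2.2⟩⟩
      invFun := fun x => ⟨(x.1.1, x.2.1.map x.1.1.subtype),
        Submodule.map_subtype_le _ _, x.1.2, by
          rw [Submodule.finrank_map_subtype_eq]; exact x.2.2⟩
      left_inv := by
        rintro ⟨⟨U, V⟩, h1, h2, h3⟩
        apply Subtype.ext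
        apply Prod.ext
        · rfl
        · simpa [Submodule.submoduleOf, Submodule.map_comap_subtype] using h1
      right_inv := by
        rintro ⟨⟨U, hU⟩, ⟨W, hW⟩⟩
        refine Sigma.ext rfl (heq_of_eq (Subtype.ext ?_))
        exact Submodule.comap_map_eq_of_injective U.injective_subtype W }
  rw [Nat.card_congr eqv, Nat.card_sigma]
  push_cast
  have : ∀ U : {U : Submodule F E // finrank F U = r},
      (Nat.card {W : Submodule F U.1 // finrank F W = s} : ℝ) = gaussR (Fintype.card F) r s := by
    rintro ⟨U, hU⟩
    have := aux_card_sub (F := F) (E := U) (s := s) (by omega)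
    rw [hU] at this
    exact this
  rw [Finset.sum_congr rfl (fun U _ => this U), Finset.sum_const, nsmul_eq_mul, Finset.card_univ,
    ← Nat.card_eq_fintype_card, aux_card_sub hr]

/-- for an α-type input, the joint and marginal distributions of
the column spaces ⟨X⟩ and ⟨Y⟩ are uniform given dimension:
Pr{⟨X⟩=U, ⟨Y⟩=V} = Pr{rank X = r, rank Y = s}/([T r]_q [r s]_q),
Pr{⟨X⟩=U} = Pr{rank X = r}/[T r]_q and Pr{⟨Y⟩=V} = Pr{rank Y = s}/[T s]_q. -/
theorem alpha_type_column_space_distribution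
    {F : Type} [Field F] [Fintype F] (q T M N : ℕ) (hq : Fintype.card F = q)
    (pH : Matrix (Fin M) (Fin N) F → ℝ) (hpH : IsPMF pH)
    (pX : Matrix (Fin T) (Fin M) F → ℝ) (hpX : IsPMF pX) (hα : IsAlphaType pX)
    (U V : Submodule F (Fin T → F)) (r s : ℕ) (hVU : V ≤ U)
    (hU : Module.finrank F U = r) (hV : Module.finrank F V = s) :
    ((∑ ω : Matrix (Fin T) (Fin M) F × Matrix (Fin M) (Fin N) F,
        if colSpace ω.1 = U ∧ colSpace (ω.1 * ω.2) = V then jointPMF pX pH ω else 0)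
      = prRankXY pX pH r s / (gaussR q T r * gaussR q r s))
    ∧ ((∑ x : Matrix (Fin T) (Fin M) F, if colSpace x = U then pX x else 0)
      = prRankX pX r / gaussR q T r)
    ∧ ((∑ ω : Matrix (Fin T) (Fin M) F × Matrix (Fin M) (Fin N) F,
        if colSpace (ω.1 * ω.2) = V then jointPMF pX pH ω else 0)
      = (∑ ω : Matrix (Fin T) (Fin M) F × Matrix (Fin M) (Fin N) F,
          if (ω.1 * ω.2).rank = s then jointPMF pX pH ω else 0) / gaussR q T s) := by
  subst hq
  have hq : 1 < Fintype.card F := Fintype.one_lt_card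
  have hr : r ≤ finrank F (Fin T → F) := hU ▸ Submodule.finrank_le U
  have hs : s ≤ r := by rw [← hU, ← hV]; exact Submodule.finrank_mono hVU
  have hrT : r ≤ T := by simpa using hr
  have hgT : finrank F (Fin T → F) = T := by simp
  have hinj : ∀ g : (Fin T → F) ≃ₗ[F] (Fin T → F), Function.Injective
      (Submodule.map (g : (Fin T → F) →ₗ[F] (Fin T → F))) := fun g =>
    Submodule.map_injective_of_injective g.injective
  have hpinv : ∀ (g : (Fin T → F) ≃ₗ[F] (Fin T → F)) X, pX (auxAct g X) = pX X :=
    fun g X => hα _ _ (aux_row_s10 g X)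
  let act : ((Fin T → F) ≃ₗ[F] (Fin T → F)) →
      (Matrix (Fin T) (Fin M) F × Matrix (Fin M) (Fin N) F ≃
        Matrix (Fin T) (Fin M) F × Matrix (Fin M) (Fin N) F) :=
    fun g => (auxAct g).prodCongr (Equiv.refl _)
  have hact : ∀ g ω, jointPMF pX pH (act g ω) = jointPMF pX pH ω := by
    intro g ω
    simp [act, jointPMF, hpinv]
  refine ⟨?_, ?_, ?_⟩
  · have h := aux_unif (jointPMF pX pH) (fun ω => (colSpace ω.1, colSpace (ω.1 * ω.2)))
      (fun P => P.2 ≤ P.1 ∧ finrank F P.1 = r ∧ finrank F P.2 = s)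
      (gaussR (Fintype.card F) T r * gaussR (Fintype.card F) r s)
      (mul_ne_zero (aux_gauss_ne hq hrT) (aux_gauss_ne hq hs))
      (by rw [aux_card_flag hr hs, hgT]) (by
        rintro ⟨A, B⟩ ⟨A', B'⟩ ⟨h1, h2, h3⟩ ⟨h1', h2', h3'⟩
        obtain ⟨g, hg1, hg2⟩ := aux_flag A A' B B' h1 h1' (h2.trans h2'.symm) (h3.trans h3'.symm)
        refine ⟨act g, Prod.map (Submodule.map (g : (Fin T → F) →ₗ[F] (Fin T → F)))
          (Submodule.map (g : (Fin T → F) →ₗ[F] (Fin T → F))), (hinj g).prodMap (hinj g),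
          Prod.ext hg1 hg2, hact g, fun ω => ?_⟩
        simp [act, auxAct_mul, auxAct_col]) (U, V) ⟨hVU, hU, hV⟩
    unfold prRankXY
    refine Eq.trans ?_ (h.trans ?_)
    · exact Finset.sum_congr rfl fun ω _ => aux_ite (by simp) _
    · congr 1
      refine Finset.sum_congr rfl fun ω _ => aux_ite ?_ _
      refine ⟨fun h => h.2, fun h => ⟨?_, h⟩⟩
      simp only [colSpace, Matrix.mulVecLin_mul]
      exact LinearMap.range_comp_le_range _ _
  · have h := aux_unif pX (fun x => colSpace x)
      (fun P => finrank F P = r) (gaussR (Fintype.card F) T r) (aux_gauss_ne hq hrT)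
      (by rw [aux_card_sub hr, hgT]) (by
        intro A A' h1 h1'
        obtain ⟨g, hg1, -⟩ := aux_flag A A' A A' le_rfl le_rfl (h1.trans h1'.symm) (h1.trans h1'.symm)
        exact ⟨auxAct g, _, hinj g, hg1, hpinv g, auxAct_col g⟩) U hU
    unfold prRankX
    refine Eq.trans ?_ (h.trans ?_)
    · exact Finset.sum_congr rfl fun ω _ => aux_ite Iff.rfl _
    · congr 1
      exact Finset.sum_congr rfl fun ω _ => aux_ite Iff.rfl _
  · have h := aux_unif (jointPMF pX pH) (fun ω => colSpace (ω.1 * ω.2))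
      (fun P => finrank F P = s) (gaussR (Fintype.card F) T s) (aux_gauss_ne hq (hs.trans hrT))
      (by rw [aux_card_sub (hs.trans hr), hgT]) (by
        intro A A' h1 h1'
        obtain ⟨g, hg1, -⟩ := aux_flag A A' A A' le_rfl le_rfl (h1.trans h1'.symm) (h1.trans h1'.symm)
        refine ⟨act g, _, hinj g, hg1, hact g, fun ω => ?_⟩
        simp [act, auxAct_mul, auxAct_col]) V hV
    refine Eq.trans ?_ (h.trans ?_)
    · exact Finset.sum_congr rfl fun ω _ => aux_ite Iff.rfl _
    · congr 1
      exact Finset.sum_congr rfl fun ω _ => aux_ite Iff.rfl _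

end
end
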